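/- The random utilities putting probability 1/2 each on the preferences represented by V₁, V₂, and by V₁′, V₂′ respectively, induce the same random choice: for every finite nonempty menu D ⊆ Δ and every set A ⊆ D, the number of indices i ∈ {1,2} such that A = {x ∈ D : ∀ y ∈ D, Vᵢ(x) ≥ Vᵢ(y)} equals the number of indices i ∈ {1,2} such that A = {x ∈ D : ∀ y ∈ D, Vᵢ′(x) ≥ Vᵢ′(y)}. -/

import Mathlib

/-!
On `Lott` the two utilities share the level set `1/2` (the line `p.2 = p.1`): each of `V1 p ≥ 1/2`,
`V2 p ≥ 1/2` says `p.1 ≤ p.2`. If the menu contains a lottery with `p.1 ≤ p.2`, every maximizer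
lies in that upper region, where `V1' = V1` and `V2' = V2`, so the choice sets coincide index by
index. Otherwise `V1' = V2` and `V2' = V1` on the whole menu, and the two indices are swapped.
-/

/-- The set of lotteries over three prizes, identified with points of `ℝ × ℝ`. -/
def Lott : Set (ℝ × ℝ) := {p | 0 ≤ p.1 ∧ 0 ≤ p.2 ∧ p.1 + p.2 ≤ 1}

/-- The weighted utility function `V₁`. -/
noncomputable def V1 (p : ℝ × ℝ) : ℝ :=
  (p.2 + (1 - p.1 - p.2) / 4) / (p.1 + p.2 + (1 - p.1 - p.2) / 2)

/-- The weighted utility function `V₂`. -/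
noncomputable def V2 (p : ℝ × ℝ) : ℝ :=
  (p.2 + (1 - p.1 - p.2)) / (p.1 + p.2 + 2 * (1 - p.1 - p.2))

/-- The non-expected utility function `V₁′`. -/
noncomputable def V1' (p : ℝ × ℝ) : ℝ := if (1 / 2 : ℝ) ≤ V1 p then V1 p else V2 p

/-- The non-expected utility function `V₂′`. -/
noncomputable def V2' (p : ℝ × ℝ) : ℝ := if (1 / 2 : ℝ) ≤ V2 p then V2 p else V1 p

/-- The pair of utilities defining the first random utility. -/
noncomputable def Vi : Fin 2 → (ℝ × ℝ) → ℝ := ![V1, V2]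

/-- The pair of utilities defining the second random utility. -/
noncomputable def Vi' : Fin 2 → (ℝ × ℝ) → ℝ := ![V1', V2']

lemma half_le_V1_iff {p : ℝ × ℝ} (hp : p ∈ Lott) : 1 / 2 ≤ V1 p ↔ p.1 ≤ p.2 := by
  obtain ⟨h1, h2, h3⟩ := hp
  rw [V1, le_div_iff₀ (by linarith)]
  constructor <;> intro h <;> linarith

lemma half_le_V2_iff {p : ℝ × ℝ} (hp : p ∈ Lott) : 1 / 2 ≤ V2 p ↔ p.1 ≤ p.2 := by
  obtain ⟨h1, h2, h3⟩ := hp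
  rw [V2, le_div_iff₀ (by linarith)]
  constructor <;> intro h <;> linarith

/-- Changing a function only where it is below `c`, to values that are again below `c`, does not
affect its maximizers on a set where the value `c` is reached or exceeded. -/
lemma isMax_congr_of_le {D : Finset (ℝ × ℝ)} {f g : ℝ × ℝ → ℝ} {c : ℝ}
    (h : ∀ x ∈ D, (c ≤ f x ∧ g x = f x) ∨ (f x < c ∧ g x < c))
    (hex : ∃ x ∈ D, c ≤ f x) {x : ℝ × ℝ} (hx : x ∈ D) :
    (∀ y ∈ D, f y ≤ f x) ↔ ∀ y ∈ D, g y ≤ g x := by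
  obtain ⟨z, hz, hcz⟩ := hex
  constructor
  · intro hm y hy
    have := hm z hz
    have := hm y hy
    rcases h x hx with h1 | h1 <;> rcases h y hy with h2 | h2 <;> linarith
  · intro hm y hy
    have := hm z hz
    have := hm y hy
    rcases h x hx with h1 | h1 <;> rcases h y hy with h2 | h2 <;>
      rcases h z hz with h3 | h3 <;> linarith

open scoped Classical in
theorem stmt_6 (D : Finset (ℝ × ℝ)) (hD : ↑D ⊆ Lott) (hne : D.Nonempty)
    (A : Finset (ℝ × ℝ)) (hA : A ⊆ D) :
    (Finset.univ.filter fun i : Fin 2 =>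
        A = D.filter fun x => ∀ y ∈ D, Vi i y ≤ Vi i x).card =
    (Finset.univ.filter fun i : Fin 2 =>
        A = D.filter fun x => ∀ y ∈ D, Vi' i y ≤ Vi' i x).card := by
  have hiff : ∀ x ∈ D, (1 / 2 ≤ V1 x ↔ 1 / 2 ≤ V2 x) := fun x hx =>
    (half_le_V1_iff (hD hx)).trans (half_le_V2_iff (hD hx)).symm
  rw [Finset.card_filter, Finset.card_filter, Fin.sum_univ_two, Fin.sum_univ_two]
  change (if A = D.filter (fun x => ∀ y ∈ D, V1 y ≤ V1 x) then 1 else 0) +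
      (if A = D.filter (fun x => ∀ y ∈ D, V2 y ≤ V2 x) then 1 else 0) =
    (if A = D.filter (fun x => ∀ y ∈ D, V1' y ≤ V1' x) then 1 else 0) +
      (if A = D.filter (fun x => ∀ y ∈ D, V2' y ≤ V2' x) then 1 else 0)
  by_cases hex : ∃ x ∈ D, 1 / 2 ≤ V1 x
  · have hex2 : ∃ x ∈ D, 1 / 2 ≤ V2 x := by
      obtain ⟨x, hx, h⟩ := hex
      exact ⟨x, hx, (hiff x hx).1 h⟩
    have e1 : D.filter (fun x => ∀ y ∈ D, V1 y ≤ V1 x) =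
        D.filter (fun x => ∀ y ∈ D, V1' y ≤ V1' x) := by
      refine Finset.filter_congr fun x hx => isMax_congr_of_le (fun z hz => ?_) hex hx
      by_cases h : 1 / 2 ≤ V1 z
      · exact Or.inl ⟨h, if_pos h⟩
      · refine Or.inr ⟨not_le.1 h, ?_⟩
        rw [V1', if_neg h]
        exact not_le.1 (mt (hiff z hz).2 h)
    have e2 : D.filter (fun x => ∀ y ∈ D, V2 y ≤ V2 x) =
        D.filter (fun x => ∀ y ∈ D, V2' y ≤ V2' x) := by
      refine Finset.filter_congr fun x hx => isMax_congr_of_le (fun z hz => ?_) hex2 hx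
      by_cases h : 1 / 2 ≤ V2 z
      · exact Or.inl ⟨h, if_pos h⟩
      · refine Or.inr ⟨not_le.1 h, ?_⟩
        rw [V2', if_neg h]
        exact not_le.1 (mt (hiff z hz).1 h)
    rw [e1, e2]
  · have h1 : ∀ x ∈ D, V1' x = V2 x := fun x hx => if_neg fun h => hex ⟨x, hx, h⟩
    have h2 : ∀ x ∈ D, V2' x = V1 x := fun x hx =>
      if_neg fun h => hex ⟨x, hx, (hiff x hx).2 h⟩
    have e1 : D.filter (fun x => ∀ y ∈ D, V1' y ≤ V1' x) =
        D.filter (fun x => ∀ y ∈ D, V2 y ≤ V2 x) :=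
      Finset.filter_congr fun x hx => forall₂_congr fun y hy => by rw [h1 x hx, h1 y hy]
    have e2 : D.filter (fun x => ∀ y ∈ D, V2' y ≤ V2' x) =
        D.filter (fun x => ∀ y ∈ D, V1 y ≤ V1 x) :=
      Finset.filter_congr fun x hx => forall₂_congr fun y hy => by rw [h2 x hx, h2 y hy]
    rw [e1, e2, add_comm]
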